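/- arXiv:2102.07681 — 4 statements merged into one kernel-verified Lean document; each statement's English description precedes it below -/
import Mathlib

section
/- For the RPPLNS bag Markov chain, the vector π given by π_k = C(N,k)·α^k·β^{N−k}/(α+β)^N for k = 0,…,N is a probability distribution on {0,…,N} and is a stationary distribution of the chain, i.e. π_k ≥ 0 for all k, ∑_{k=0}^{N} π_k = 1, and ∑_{i=0}^{N} π_i·P(i,k) = π_k for every k ∈ {0,…,N}. -/
/-- Transition matrix of the RPPLNS bag Markov chain on `{0,…,N}`:
`P(i, i+1) = α·(N−i)/N` for `i < N`, `P(i, i−1) = β·i/N` for `i > 0`,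
`P(i, i) = 1 − α·(N−i)/N − β·i/N`, and `P(i, j) = 0` otherwise. -/
noncomputable def bagP (N : ℕ) (α β : ℝ) (i j : ℕ) : ℝ :=
  if j = i + 1 ∧ i < N then α * ((N : ℝ) - i) / N
  else if i = j + 1 then β * i / N
  else if i = j then 1 - α * ((N : ℝ) - i) / N - β * i / N
  else 0

/-- `π_k = C(N,k)·α^k·β^{N−k}/(α+β)^N`. -/
noncomputable def bagPi (N : ℕ) (α β : ℝ) (k : ℕ) : ℝ :=
  (N.choose k : ℝ) * α ^ k * β ^ (N - k) / (α + β) ^ N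

theorem bagPi_step (N : ℕ) (α β : ℝ) (j : ℕ) (hj : j < N) :
    bagPi N α β j * (α * ((N : ℝ) - j) / N) = bagPi N α β (j + 1) * (β * ((j + 1 : ℕ) : ℝ) / N) := by
  have h := Nat.choose_succ_right_eq N j
  have h2 : (N.choose (j + 1) : ℝ) * ((j : ℝ) + 1) = N.choose j * ((N : ℝ) - j) := by
    rw [← Nat.cast_sub hj.le]
    exact_mod_cast h
  have e : N - j = (N - (j + 1)) + 1 := by omega
  unfold bagPi
  rw [e, pow_succ, pow_succ]
  push_cast
  linear_combination (-(α ^ j * α * β ^ (N - (j + 1)) * β / (α + β) ^ N / N)) * h2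

theorem bag_balance (N : ℕ) (α β : ℝ) (i j : ℕ) (hi : i ≤ N) (hj : j ≤ N) :
    bagPi N α β i * bagP N α β i j = bagPi N α β j * bagP N α β j i := by
  by_cases h1 : j = i + 1
  · subst h1
    have hl : i < N := hj
    have := bagPi_step N α β i hl
    simpa [bagP, hl, show ¬ (i = i + 1 + 1) by omega] using this
  by_cases h2 : i = j + 1
  · subst h2
    have hl : j < N := hi
    have := bagPi_step N α β j hl
    simpa [bagP, hl, show ¬ (j = j + 1 + 1) by omega] using this.symm
  by_cases h3 : i = j
  · subst h3; rfl
  · simp [bagP, h1, h2, h3, Ne.symm h3]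

theorem bag_row (N : ℕ) (α β : ℝ) (k : ℕ) (hk : k ≤ N) :
    ∑ i ∈ Finset.range (N + 1), bagP N α β k i = 1 := by
  have hs : ∀ i ∈ Finset.range (N + 1), bagP N α β k i =
      (if i = k + 1 then α * ((N : ℝ) - k) / N else 0) +
      (if k = i + 1 then β * k / N else 0) +
      (if i = k then 1 - α * ((N : ℝ) - k) / N - β * k / N else 0) := by
    intro i hi
    have hi' := Finset.mem_range.1 hi
    unfold bagP
    split_ifs <;> first | omega | simp
  have h1 : ∑ i ∈ Finset.range (N + 1), (if i = k + 1 then α * ((N : ℝ) - k) / N else 0)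
      = α * ((N : ℝ) - k) / N := by
    rw [Finset.sum_ite_eq']
    split_ifs with h
    · rfl
    · have : k = N := by rw [Finset.mem_range] at h; omega
      simp [this]
  have h2 : ∑ i ∈ Finset.range (N + 1), (if k = i + 1 then β * (k : ℝ) / N else 0)
      = β * k / N := by
    cases k with
    | zero => simp
    | succ m =>
      simp only [add_left_inj]
      rw [Finset.sum_ite_eq, if_pos (Finset.mem_range.2 (by omega))]
  rw [Finset.sum_congr rfl hs, Finset.sum_add_distrib, Finset.sum_add_distrib, h1, h2,
    Finset.sum_ite_eq', if_pos (Finset.mem_range.2 (by omega))]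
  ring

/-- For the RPPLNS bag Markov chain (`N ≥ 1`, `α, β > 0`, `α + β ≤ 1`), the vector
`π_k = C(N,k)·α^k·β^{N−k}/(α+β)^N`, `k = 0,…,N`, is a probability distribution on
`{0,…,N}` and is a stationary distribution of the chain: `π_k ≥ 0` for all `k`,
`∑_{k=0}^{N} π_k = 1`, and `∑_{i=0}^{N} π_i·P(i,k) = π_k` for every `k ∈ {0,…,N}`. -/
theorem bagPi_stationary (N : ℕ) (hN : 1 ≤ N) (α β : ℝ)
    (hα : 0 < α) (hβ : 0 < β) (hαβ : α + β ≤ 1) :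
    (∀ k ≤ N, 0 ≤ bagPi N α β k) ∧
    (∑ k ∈ Finset.range (N + 1), bagPi N α β k = 1) ∧
    (∀ k ≤ N, ∑ i ∈ Finset.range (N + 1), bagPi N α β i * bagP N α β i k
        = bagPi N α β k) := by
  refine ⟨fun k _ => by unfold bagPi; positivity, ?_, ?_⟩
  · unfold bagPi
    have hp : (α + β) ^ N ≠ 0 := by positivity
    rw [← Finset.sum_div, div_eq_one_iff_eq hp, add_pow]
    exact Finset.sum_congr rfl fun k _ => by ring
  · intro k hk
    rw [Finset.sum_congr rfl fun i hi =>
      bag_balance N α β i k (Nat.lt_succ_iff.1 (Finset.mem_range.1 hi)) hk,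
      ← Finset.mul_sum, bag_row N α β k hk, mul_one]
end

section
/- Consider the residual-share process in an RPPLNS bag of size N ≥ 1: X₀ = A (a natural number with A ≤ N), and at each step X_{n+1} = X_n − B_n, where conditionally on X_n the random variable B_n is Bernoulli with success probability X_n/N (a uniformly random share of the full bag is replaced by a fresh share, which removes a residual share exactly when the chosen share is residual). Then for every n ∈ ℕ, E[X_n] = A·((N−1)/N)^n. -/
open MeasureTheory ProbabilityTheory
open scoped ENNReal

/-- Residual-share process in an RPPLNS bag of size `N ≥ 1`: the Markov chain `(X n)` on
`{0,…,N}` starts at `X 0 = A` (`A ≤ N`), and from state `x` moves to `x − 1` with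
probability `x/N` and stays at `x` with probability `(N−x)/N` (a uniformly random share
of the full bag is replaced by a fresh one, removing a residual share exactly when the
chosen share is residual).  Then for every `n`, `E[X n] = A·((N−1)/N)^n`. -/
theorem residual_share_expectation
    (N A : ℕ) (hN : 1 ≤ N) (hA : A ≤ N)
    {Ω : Type*} [MeasureSpace Ω] [IsProbabilityMeasure (ℙ : Measure Ω)]
    (X : ℕ → Ω → ℕ) (hXmeas : ∀ n, Measurable (X n))
    (hX0 : ∀ ω, X 0 ω = A)
    (hXle : ∀ n ω, X n ω ≤ N)
    (hdown : ∀ n x, 1 ≤ x →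
      ℙ {ω : Ω | X n ω = x ∧ X (n + 1) ω = x - 1}
        = ((x : ℝ≥0∞) / N) * ℙ {ω : Ω | X n ω = x})
    (hstay : ∀ n x,
      ℙ {ω : Ω | X n ω = x ∧ X (n + 1) ω = x}
        = (((N - x : ℕ) : ℝ≥0∞) / N) * ℙ {ω : Ω | X n ω = x}) :
    ∀ n, ∫ ω, (X n ω : ℝ) ∂ℙ = A * (((N : ℝ) - 1) / N) ^ n := by
  have hN0 : (N : ℝ) ≠ 0 := by
    have : N ≠ 0 := by omega
    exact_mod_cast this
  have mE : ∀ n x, MeasurableSet {ω : Ω | X n ω = x} := fun n x =>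
    hXmeas n (measurableSet_singleton x)
  have mD : ∀ n x y, MeasurableSet {ω : Ω | X n ω = x ∧ X (n + 1) ω = y} := fun n x y =>
    (mE n x).inter (mE (n + 1) y)
  have hd : ∀ n x, 1 ≤ x →
      (ℙ : Measure Ω).real {ω : Ω | X n ω = x ∧ X (n + 1) ω = x - 1}
        = ((x : ℝ) / N) * (ℙ : Measure Ω).real {ω : Ω | X n ω = x} := by
    intro n x hx
    simp [Measure.real, hdown n x hx, ENNReal.toReal_mul, ENNReal.toReal_div]
  have hs : ∀ n x, x ≤ N →
      (ℙ : Measure Ω).real {ω : Ω | X n ω = x ∧ X (n + 1) ω = x}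
        = (((N : ℝ) - x) / N) * (ℙ : Measure Ω).real {ω : Ω | X n ω = x} := by
    intro n x hx
    rw [Measure.real, hstay n x, ENNReal.toReal_mul, ENNReal.toReal_div,
      ENNReal.toReal_natCast, ENNReal.toReal_natCast, Nat.cast_sub hx, Measure.real]
  have hae : ∀ n x, ∀ᵐ ω ∂(ℙ : Measure Ω), X n ω = x →
      (X (n + 1) ω = x ∨ (1 ≤ x ∧ X (n + 1) ω = x - 1)) := by
    intro n x
    by_cases hx : x ≤ N
    swap
    · filter_upwards with ω h
      have := hXle n ω
      omega
    set T : Set Ω := {ω : Ω | X n ω = x ∧ X (n + 1) ω = x} ∪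
      {ω : Ω | 1 ≤ x ∧ X n ω = x ∧ X (n + 1) ω = x - 1} with hT
    have hTm : MeasurableSet T := by
      refine (mD n x x).union ?_
      exact (MeasurableSet.const _).inter (mD n x (x - 1))
    have hTs : T ⊆ {ω : Ω | X n ω = x} := by
      rintro ω (h | h)
      · exact h.1
      · exact h.2.1
    have hTr : (ℙ : Measure Ω).real T = (ℙ : Measure Ω).real {ω : Ω | X n ω = x} := by
      rcases Nat.eq_zero_or_pos x with h0 | h1
      · have : T = {ω : Ω | X n ω = x ∧ X (n + 1) ω = x} := by
          ext ω; simp [hT, h0]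
        rw [this, hs n x hx, h0]
        field_simp
        simp
      · have h1' : 1 ≤ x := h1
        have : T = {ω : Ω | X n ω = x ∧ X (n + 1) ω = x} ∪
            {ω : Ω | X n ω = x ∧ X (n + 1) ω = x - 1} := by
          ext ω; simp [hT, h1']
        rw [this, measureReal_union _ (mD n x (x - 1)), hs n x hx, hd n x h1']
        · field_simp
          ring
        · rw [Set.disjoint_left]
          rintro ω ⟨_, h⟩ ⟨_, h'⟩
          omega
    have hz : (ℙ : Measure Ω).real ({ω : Ω | X n ω = x} \ T) = 0 := by
      rw [measureReal_diff hTs hTm, hTr, sub_self]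
    rw [measureReal_eq_zero_iff] at hz
    have := measure_eq_zero_iff_ae_notMem.1 hz
    filter_upwards [this] with ω hω h
    by_contra hc
    apply hω
    refine ⟨h, ?_⟩
    rintro (h' | h')
    · exact hc (Or.inl h'.2)
    · exact hc (Or.inr ⟨h'.1, h'.2.2⟩)
  have hE : ∀ n, ∫ ω, (X n ω : ℝ) ∂ℙ =
      ∑ x ∈ Finset.Icc 1 N, (x : ℝ) * (ℙ : Measure Ω).real {ω : Ω | X n ω = x} := by
    intro n
    have : ∀ ω, (X n ω : ℝ) = ∑ x ∈ Finset.Icc 1 N,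
        Set.indicator {ω : Ω | X n ω = x} (fun _ => (x : ℝ)) ω := by
      intro ω
      simp only [Set.indicator_apply, Set.mem_setOf_eq, Finset.sum_ite_eq, Finset.mem_Icc]
      have := hXle n ω
      split_ifs with h
      · rfl
      · have : X n ω = 0 := by omega
        simp [this]
    simp_rw [this]
    rw [integral_finsetSum]
    · refine Finset.sum_congr rfl fun x _ => ?_
      rw [integral_indicator_const _ (mE n x), smul_eq_mul, mul_comm]
    · intro x _
      exact (integrable_const _).indicator (mE n x)
  have hint : ∀ n, Integrable (fun ω => (X n ω : ℝ)) (ℙ : Measure Ω) := by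
    intro n
    refine Integrable.of_bound (C := N)
      (measurable_from_top.comp (hXmeas n)).aestronglyMeasurable ?_
    filter_upwards with ω
    simpa using hXle n ω
  intro n
  induction n with
  | zero => simp [hX0]
  | succ n ih =>
    have key : ∀ᵐ ω ∂(ℙ : Measure Ω), (X (n + 1) ω : ℝ) = X n ω - ∑ x ∈ Finset.Icc 1 N,
        Set.indicator {ω : Ω | X n ω = x ∧ X (n + 1) ω = x - 1} (fun _ => (1 : ℝ)) ω := by
      filter_upwards [ae_all_iff.2 (hae n)] with ω h
      have hle := hXle n ω
      simp only [Set.indicator_apply, Set.mem_setOf_eq, ite_and, Finset.sum_ite_eq,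
        Finset.mem_Icc]
      rcases h _ rfl with h | ⟨h1, h⟩
      · rw [h]
        by_cases h0 : X n ω = 0
        · simp [h0]
        · have : ¬ (X n ω = X n ω - 1) := by omega
          simp [this]
      · rw [if_pos h1, if_pos hle, if_pos h, h, Nat.cast_sub h1]
        simp
    have hI : ∀ x ∈ Finset.Icc 1 N, Integrable (Set.indicator
        {ω : Ω | X n ω = x ∧ X (n + 1) ω = x - 1} (fun _ => (1 : ℝ))) (ℙ : Measure Ω) :=
      fun x _ => (integrable_const _).indicator (mD n x (x - 1))
    rw [integral_congr_ae key, integral_sub (hint n) (integrable_finsetSum _ hI),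
      integral_finsetSum _ hI]
    have h2 : ∑ x ∈ Finset.Icc 1 N, ∫ ω, Set.indicator
        {ω : Ω | X n ω = x ∧ X (n + 1) ω = x - 1} (fun _ => (1 : ℝ)) ω ∂ℙ
        = (∫ ω, (X n ω : ℝ) ∂ℙ) / N := by
      rw [hE n, Finset.sum_div]
      refine Finset.sum_congr rfl fun x hx => ?_
      rw [integral_indicator_const _ (mD n x (x - 1)), smul_eq_mul, mul_one,
        hd n x (Finset.mem_Icc.1 hx).1]
      ring
    rw [h2, ih, pow_succ]
    field_simp
end

section
/- In the PPLNS two-turn block-hoarding comparison, if α > (N + D − 1)/(D − 1)², then the strategic deviation strictly dominates honest mining: R_S > R_H, where R_H = H₁·p₁ + H₂·p₂ + H₃·p₃ + H₄·p₄ + H₅·p₅ + H₆·p₆ and R_S = S₁·p₁ + S₂·p₂ + S₃·p₃ + S₄·p₄ + S₅·p₅ + S₆·p₆. -/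
/-- Expected revenue of the honest strategy `H` in the PPLNS two-turn block-hoarding
comparison: `R_H = H₁·p₁ + H₂·p₂ + H₃·p₃ + H₄·p₄ + H₅·p₅ + H₆·p₆` with
`p₁ = α/D`, `p₂ = α(D−1)/D`, `p₃ = β/D`, `p₄ = β(D−1)/D`, `p₅ = γ/D`, `p₆ = γ(D−1)/D`,
`H₁ = 3/N + (N−2)/(ND) + (N−1)/(ND)`, `H₂ = 1/N + (N−2)/(ND) + (N−1)/(ND)`,
`H₃ = 2/N + (N−2)/(ND)`, `H₄ = 1/N + (N−2)/(ND)`, `H₅ = H₆ = 1/N + (N−1)/(ND)`. -/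
noncomputable def pplnsRH (N D α β γ : ℝ) : ℝ :=
  (3 / N + (N - 2) / (N * D) + (N - 1) / (N * D)) * (α / D)
    + (1 / N + (N - 2) / (N * D) + (N - 1) / (N * D)) * (α * (D - 1) / D)
    + (2 / N + (N - 2) / (N * D)) * (β / D)
    + (1 / N + (N - 2) / (N * D)) * (β * (D - 1) / D)
    + (1 / N + (N - 1) / (N * D)) * (γ / D)
    + (1 / N + (N - 1) / (N * D)) * (γ * (D - 1) / D)

/-- Expected revenue of the block-hoarding strategy `S` in the PPLNS two-turn comparison:
`R_S = S₁·p₁ + S₂·p₂ + S₃·p₃ + S₄·p₄ + S₅·p₅ + S₆·p₆` with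
`S₁ = 1/N + (N−1)/(ND)`, `S₂ = 2/N + (N−2)/(ND) + (N−1)/(ND)`, `S₃ = 0`,
`S₄ = 1/N + (N−1)/(ND)`, `S₅ = 0`, `S₆ = 1/N + (N−1)/(ND)`. -/
noncomputable def pplnsRS (N D α β γ : ℝ) : ℝ :=
  (1 / N + (N - 1) / (N * D)) * (α / D)
    + (2 / N + (N - 2) / (N * D) + (N - 1) / (N * D)) * (α * (D - 1) / D)
    + 0 * (β / D)
    + (1 / N + (N - 1) / (N * D)) * (β * (D - 1) / D)
    + 0 * (γ / D)
    + (1 / N + (N - 1) / (N * D)) * (γ * (D - 1) / D)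

/-- In the PPLNS two-turn block-hoarding comparison (queue size `N ≥ 1`, difficulty
`D ≥ 2`, hash powers `α, β, γ ≥ 0` with `α + β + γ = 1`), if
`α > (N + D − 1)/(D − 1)²` then the strategic deviation strictly dominates honest
mining: `R_S > R_H`. -/
theorem pplns_block_hoarding_dominates
    (N D : ℕ) (hN : 1 ≤ N) (hD : 2 ≤ D) (α β γ : ℝ)
    (hα : 0 ≤ α) (hβ : 0 ≤ β) (hγ : 0 ≤ γ) (hsum : α + β + γ = 1)
    (h : α > ((N : ℝ) + D - 1) / ((D : ℝ) - 1) ^ 2) :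
    pplnsRS N D α β γ > pplnsRH N D α β γ := by
  have hN' : (0 : ℝ) < N := by exact_mod_cast hN
  have hD' : (2 : ℝ) ≤ D := by exact_mod_cast hD
  have hD0 : (0 : ℝ) < D := by linarith
  have h1 : (0 : ℝ) < ((D : ℝ) - 1) ^ 2 := by
    have : (0 : ℝ) < (D : ℝ) - 1 := by linarith
    positivity
  have h2 : (N : ℝ) + D - 1 < α * ((D : ℝ) - 1) ^ 2 := (div_lt_iff₀ h1).mp h
  have hγ' : γ = 1 - α - β := by linarith
  have key : pplnsRS N D α β γ - pplnsRH N D α β γ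
      = (α * ((D : ℝ) - 1) ^ 2 - ((N : ℝ) + D - 1)) / (N * D * D) := by
    unfold pplnsRS pplnsRH
    rw [hγ']
    field_simp
    ring
  have h3 : 0 < (α * ((D : ℝ) - 1) ^ 2 - ((N : ℝ) + D - 1)) / (N * D * D) := by
    apply div_pos
    · linarith
    · positivity
  linarith
end

section
/- In the RPPLNS two-turn block-hoarding comparison with an empty bag (k = 0), if α > (1/(D−1)²)·(N·D/(N−1) + N − β·(N−2)), then the strategic deviation strictly dominates honest mining: Δ₁·p₁ + Δ₂·p₂ + Δ₃·p₃ + Δ₄·p₄ + Δ₅·p₅ + Δ₆·p₆ > 0. -/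
/-- In the RPPLNS two-turn block-hoarding comparison with an empty bag (`k = 0`), with
bag size `N ≥ 2`, difficulty `D ≥ 2`, and hash powers `α, β, γ ≥ 0`, `α + β + γ = 1`,
the case probabilities are `p₁ = α/D`, `p₂ = α(D−1)/D`, `p₃ = β/D`, `p₄ = β(D−1)/D`,
`p₅ = γ/D`, `p₆ = γ(D−1)/D`, and the per-case payoff surpluses of the hoarding strategy
over the honest strategy are `Δ₁ = −(1/N + (N−1)/N² + (N−1)²/(N²D))`, `Δ₂ = (N−1)/N²`,
`Δ₃ = −(1/N + (N−1)/N² + (N−1)/(N²D))`, `Δ₄ = (N−1)/(N²D)`, `Δ₅ = −(1/N + (N−1)/(ND))`,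
`Δ₆ = 0`.  If `α > (1/(D−1)²)·(N·D/(N−1) + N − β·(N−2))`, then the strategic deviation
strictly dominates honest mining: `Δ₁·p₁ + Δ₂·p₂ + Δ₃·p₃ + Δ₄·p₄ + Δ₅·p₅ + Δ₆·p₆ > 0`. -/
theorem rpplns_block_hoarding_dominates
    (N D : ℕ) (hN : 2 ≤ N) (hD : 2 ≤ D) (α β γ : ℝ)
    (hα : 0 ≤ α) (hβ : 0 ≤ β) (hγ : 0 ≤ γ) (hsum : α + β + γ = 1)
    (h : α > (1 / ((D : ℝ) - 1) ^ 2) *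
        ((N : ℝ) * D / ((N : ℝ) - 1) + N - β * ((N : ℝ) - 2))) :
    (-(1 / (N : ℝ) + ((N : ℝ) - 1) / (N : ℝ) ^ 2
          + ((N : ℝ) - 1) ^ 2 / ((N : ℝ) ^ 2 * D))) * (α / D)
      + (((N : ℝ) - 1) / (N : ℝ) ^ 2) * (α * ((D : ℝ) - 1) / D)
      + (-(1 / (N : ℝ) + ((N : ℝ) - 1) / (N : ℝ) ^ 2
          + ((N : ℝ) - 1) / ((N : ℝ) ^ 2 * D))) * (β / D)
      + (((N : ℝ) - 1) / ((N : ℝ) ^ 2 * D)) * (β * ((D : ℝ) - 1) / D)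
      + (-(1 / (N : ℝ) + ((N : ℝ) - 1) / ((N : ℝ) * D))) * (γ / D)
      + 0 * (γ * ((D : ℝ) - 1) / D) > 0 := by
  have hn : (2 : ℝ) ≤ N := by exact_mod_cast hN
  have hd : (2 : ℝ) ≤ D := by exact_mod_cast hD
  generalize (N : ℝ) = n at *
  generalize (D : ℝ) = d at *
  have hn0 : 0 < n := by linarith
  have hd0 : 0 < d := by linarith
  have hn1 : 0 < n - 1 := by linarith
  have hd1 : 0 < (d - 1) ^ 2 := by
    have : 0 < d - 1 := by linarith
    positivity
  have h2 : 0 < α * (d - 1) ^ 2 - (n * d / (n - 1) + n - β * (n - 2)) := by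
    rw [gt_iff_lt, one_div, inv_mul_lt_iff₀ hd1] at h
    linarith
  have h3 : 0 < (n - 1) / (n ^ 2 * d ^ 2) *
      (α * (d - 1) ^ 2 - (n * d / (n - 1) + n - β * (n - 2))) := by positivity
  have hne := hn1.ne'
  obtain rfl : γ = 1 - α - β := by linarith
  refine lt_of_lt_of_eq h3 ?_
  field_simp
  ring
end
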